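/- Let f : X → Y be an η-quasisymmetry between metric spaces and let A, B ⊆ X be nonempty compact sets with 0 < |A| and |B| ≤ |A|. Then dist(f(A), f(B)) ≤ (1 + η(2 + dist(A,B)/|A|))·|f(A)|. -/

import Mathlib

open Set Metric MeasureTheory ProbabilityTheory Filter
open scoped ENNReal NNReal Classical

noncomputable section

/-- A distortion function: a homeomorphism of `[0,∞)` onto itself
(equivalently, a continuous strictly increasing surjection of `[0,∞)` with `η 0 = 0`). -/
def IsDistortion (η : ℝ → ℝ) : Prop :=
  ContinuousOn η (Set.Ici 0) ∧ StrictMonoOn η (Set.Ici 0) ∧ η 0 = 0 ∧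
    Set.SurjOn η (Set.Ici 0) (Set.Ici 0)

/-- `f` is an `η`-quasisymmetry on the set `E`:
it is injective on `E` and satisfies the quasisymmetry inequality on points of `E`. -/
def IsQSOn {X Y : Type*} [MetricSpace X] [MetricSpace Y] (η : ℝ → ℝ) (f : X → Y)
    (E : Set X) : Prop :=
  Set.InjOn f E ∧ ∀ x ∈ E, ∀ y ∈ E, ∀ z ∈ E, x ≠ z →
    dist (f x) (f y) ≤ η (dist x y / dist x z) * dist (f x) (f z)

/-- `f` is a `β`-power quasisymmetry on `E`: an `η`-quasisymmetry with
`η t = C * max (t ^ β) (t ^ (1 / β))` for some `C > 0`. -/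
def IsPowerQSOn {X Y : Type*} [MetricSpace X] [MetricSpace Y] (β : ℝ) (f : X → Y)
    (E : Set X) : Prop :=
  ∃ C : ℝ, 0 < C ∧ IsQSOn (fun t => C * max (t ^ β) (t ^ (1 / β))) f E

/-- Distance between two sets: `inf {dist a b : a ∈ A, b ∈ B}`. -/
def setDist {X : Type*} [MetricSpace X] (A B : Set X) : ℝ :=
  sInf (Set.image2 dist A B)

/-- The closed axis-parallel cube with lower corner `c` and side length `l`. -/
def cube {d : ℕ} (c : Fin d → ℝ) (l : ℝ) : Set (EuclideanSpace ℝ (Fin d)) :=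
  {x | ∀ i, c i ≤ x i ∧ x i ≤ c i + l}

/-- Lower corner of the subcube with address `a` when the cube with lower corner `c` and
side `l` is divided into `K ^ d` congruent subcubes. -/
def childCorner {d : ℕ} (c : Fin d → ℝ) (l : ℝ) (K : ℕ) (a : Fin d → Fin K) : Fin d → ℝ :=
  fun i => c i + l / K * (a i : ℝ)

/-- Side length `N ^ (-m*n)` of level-`n` cubes in the `(N,m)`-fat Cantor construction. -/
def fatSide (N m n : ℕ) : ℝ := ((N : ℝ) ^ (m * n))⁻¹

/-- `𝓕` is the sequence of families of cubes of an `(N,m)`-fat Cantor construction in `[0,1]^d`: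
`𝓕 0 = {[0,1]^d}`, and each cube `Q ∈ 𝓕 n` is divided into `N^(m*d)` congruent subcubes of which
exactly one is removed, `𝓕 (n+1)` consisting of all retained subcubes. -/
def IsFatCantorFamilies (d N m : ℕ) (𝓕 : ℕ → Set (Set (EuclideanSpace ℝ (Fin d)))) : Prop :=
  𝓕 0 = {cube (fun _ => 0) 1} ∧
  (∀ n, ∀ Q ∈ 𝓕 n, ∃ c : Fin d → ℝ, Q = cube c (fatSide N m n) ∧
    ∃ a₀ : Fin d → Fin (N ^ m),
      {Q' ∈ 𝓕 (n + 1) | Q' ⊆ Q} =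
        {Q' | ∃ a : Fin d → Fin (N ^ m), a ≠ a₀ ∧
          Q' = cube (childCorner c (fatSide N m n) (N ^ m) a) (fatSide N m (n + 1))}) ∧
  (∀ n, ∀ Q' ∈ 𝓕 (n + 1), ∃ Q ∈ 𝓕 n, Q' ⊆ Q)

/-- `F` is an `(N,m)`-fat Cantor set in `[0,1]^d`. -/
def IsFatCantorSet (d N m : ℕ) (F : Set (EuclideanSpace ℝ (Fin d))) : Prop :=
  ∃ 𝓕, IsFatCantorFamilies d N m 𝓕 ∧ F = ⋂ n, ⋃₀ 𝓕 n

/-- Side length `∏_{m=1}^n (N m)⁻¹` of level-`n` cubes of a dense-Cantor construction with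
subdivision sequence `N`. -/
def denseSide (N : ℕ → ℕ) (n : ℕ) : ℝ := ∏ m ∈ Finset.Icc 1 n, ((N m : ℝ))⁻¹

/-- `𝓔` is the sequence of families of cubes of a dense-Cantor construction in `[0,1]^d`
with subdivision sequence `N`: `𝓔 0 = {[0,1]^d}`, every cube of `𝓔 (n+1)` is one of the
`(N (n+1))^d` congruent subcubes of a cube of `𝓔 n`, and every cube of `𝓔 n` has at least one
retained subcube in `𝓔 (n+1)`. -/
def IsDenseCantorFamilies (d : ℕ) (N : ℕ → ℕ)
    (𝓔 : ℕ → Set (Set (EuclideanSpace ℝ (Fin d)))) : Prop :=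
  𝓔 0 = {cube (fun _ => 0) 1} ∧
  (∀ n, ∀ Q' ∈ 𝓔 (n + 1), ∃ Q ∈ 𝓔 n, Q' ⊆ Q ∧ ∃ c : Fin d → ℝ, Q = cube c (denseSide N n) ∧
      ∃ a : Fin d → Fin (N (n + 1)),
        Q' = cube (childCorner c (denseSide N n) (N (n + 1)) a) (denseSide N (n + 1))) ∧
  (∀ n, ∀ Q ∈ 𝓔 n, ∃ Q' ∈ 𝓔 (n + 1), Q' ⊆ Q)

/-- A (possibly degenerate) line segment parallel to the `d`-th coordinate direction
(the kernel of the projection to the first `d-1` coordinates). -/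
def IsVerticalSeg {d : ℕ} (A : Set (EuclideanSpace ℝ (Fin d))) : Prop :=
  ∃ x y : EuclideanSpace ℝ (Fin d), A = segment ℝ x y ∧
    ∀ i : Fin d, (i : ℕ) < d - 1 → x i = y i

/-- The dense-Cantor construction `𝓔` is `(Δ_n)_n`-dense: for all sufficiently large `n` and
every `Q ∈ 𝓔 n`, every vertical line segment contained in `Q \ ⋃ 𝓔 (n+1)` has diameter at most
`Δ (n+1) * diam Q`. -/
def IsDeltaDense {d : ℕ} (Δ : ℕ → ℝ) (𝓔 : ℕ → Set (Set (EuclideanSpace ℝ (Fin d)))) : Prop :=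
  ∃ n₀ : ℕ, ∀ n, n₀ ≤ n → ∀ Q ∈ 𝓔 n, ∀ A : Set (EuclideanSpace ℝ (Fin d)),
    IsVerticalSeg A → A ⊆ Q \ ⋃₀ 𝓔 (n + 1) →
      Metric.diam A ≤ Δ (n + 1) * Metric.diam Q

/-- The dyadic cube of level `k` in `[0,1]^d` with address `a`. -/
def dyCube (d k : ℕ) (a : Fin d → Fin (2 ^ k)) : Set (EuclideanSpace ℝ (Fin d)) :=
  cube (fun i => (a i : ℝ) / 2 ^ k) (((2 : ℝ) ^ k)⁻¹)

/-- Lower corner of the level-`n` `N`-adic cube of `[0,1]^d` with address word `w`. -/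
def fatCorner (d N : ℕ) {n : ℕ} (w : Fin n → Fin d → Fin N) : Fin d → ℝ :=
  fun i => ∑ j : Fin n, ((N : ℝ) ^ (j.val + 1))⁻¹ * (w j i : ℝ)

/-- In fractal percolation with retention coins `X`, the cube with address word `w` survives if
all of its ancestors (including itself) are retained. -/
def FatSurvives {Ω : Type*} {d N : ℕ} (X : ∀ n : ℕ, (Fin n → Fin d → Fin N) → Ω → Bool)
    (ω : Ω) {n : ℕ} (w : Fin n → Fin d → Fin N) : Prop :=
  ∀ m : ℕ, ∀ h : m ≤ n, 1 ≤ m → X m (fun j => w (Fin.castLE h j)) ω = true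

/-- The fractal percolation limit set determined by the retention coins `X` at sample `ω`:
the intersection over `n` of the unions of surviving level-`n` `N`-adic cubes. -/
def fatPerc {Ω : Type*} (d N : ℕ) (X : ∀ n : ℕ, (Fin n → Fin d → Fin N) → Ω → Bool)
    (ω : Ω) : Set (EuclideanSpace ℝ (Fin d)) :=
  ⋂ n : ℕ, ⋃ w : Fin n → Fin d → Fin N, ⋃ (_ : FatSurvives X ω w),
    cube (fatCorner d N w) (((N : ℝ) ^ n)⁻¹)

/-- Lower corner of the level-`n` cube with address word `w` in the subdivision scheme where the
level-`j` cubes have side `denseSide N j`. -/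
def denseCorner (d : ℕ) (N : ℕ → ℕ) {n : ℕ}
    (w : (j : Fin n) → Fin d → Fin (N (j.val + 1))) : Fin d → ℝ :=
  fun i => ∑ j : Fin n, denseSide N (j.val + 1) * (w j i : ℝ)

/-- Survival of the cube with address word `w` in dense fractal percolation with coins `X`. -/
def DenseSurvives {Ω : Type*} {d : ℕ} {N : ℕ → ℕ}
    (X : ∀ n : ℕ, ((j : Fin n) → Fin d → Fin (N (j.val + 1))) → Ω → Bool) (ω : Ω) {n : ℕ}
    (w : (j : Fin n) → Fin d → Fin (N (j.val + 1))) : Prop :=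
  ∀ m : ℕ, ∀ h : m ≤ n, 1 ≤ m → X m (fun j => w (Fin.castLE h j)) ω = true

/-- The dense fractal percolation limit set determined by the retention coins `X` at `ω`. -/
def densePerc {Ω : Type*} (d : ℕ) (N : ℕ → ℕ)
    (X : ∀ n : ℕ, ((j : Fin n) → Fin d → Fin (N (j.val + 1))) → Ω → Bool) (ω : Ω) :
    Set (EuclideanSpace ℝ (Fin d)) :=
  ⋂ n : ℕ, ⋃ w : (j : Fin n) → Fin d → Fin (N (j.val + 1)), ⋃ (_ : DenseSurvives X ω w),
    cube (denseCorner d N w) (denseSide N n)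

/-- The function `g_N (s) = 1 - (1-s)^N - N s (1-s)^(N-1) + N^(-5)`. -/
def gFun (N : ℕ) (s : ℝ) : ℝ :=
  1 - (1 - s) ^ N - N * s * (1 - s) ^ (N - 1) + ((N : ℝ) ^ 5)⁻¹

end

/-!
Choose `x, z ∈ A` almost realizing `|A|`, and `a ∈ A`, `y ∈ B` almost realizing `dist(A, B)`. The
triangle inequality through `a` bounds `dist x y` by about `|A| + dist(A, B)`, so
`dist x y / dist x z` can be brought below any `t > 1 + dist(A, B) / |A|`. Quasisymmetry then bounds
`dist (f x) (f y)` by `η t * dist (f x) (f z)`.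
-/

section Diameter

variable {X : Type*} [PseudoMetricSpace X] {s : Set X}

theorem exists_lt_dist_of_lt_diam {r : ℝ} (hr : 0 ≤ r) (h : r < diam s) :
    ∃ x ∈ s, ∃ z ∈ s, r < dist x z := by
  contrapose! h
  exact diam_le_of_forall_dist_le hr h

theorem isBounded_of_diam_pos (h : 0 < diam s) : Bornology.IsBounded s := by
  by_contra hs
  exact h.ne' (diam_eq_zero_of_unbounded hs)

end Diameter

section SetDist

variable {X : Type*} [MetricSpace X] {A B : Set X}

theorem setDist_nonneg : 0 ≤ setDist A B := by
  apply Real.sInf_nonneg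
  rintro _ ⟨x, -, y, -, rfl⟩
  exact dist_nonneg

theorem setDist_le_dist {x y : X} (hx : x ∈ A) (hy : y ∈ B) : setDist A B ≤ dist x y := by
  refine csInf_le ⟨0, ?_⟩ (mem_image2_of_mem hx hy)
  rintro _ ⟨a, -, b, -, rfl⟩
  exact dist_nonneg

theorem exists_dist_lt_of_setDist_lt (hA : A.Nonempty) (hB : B.Nonempty) {r : ℝ}
    (h : setDist A B < r) : ∃ x ∈ A, ∃ y ∈ B, dist x y < r := by
  obtain ⟨_, ⟨x, hx, y, hy, rfl⟩, hxy⟩ := exists_lt_of_csInf_lt (hA.image2 hB) h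
  exact ⟨x, hx, y, hy, hxy⟩

theorem exists_dist_lt_mul_dist (hA : 0 < diam A) (hB : B.Nonempty) {t : ℝ}
    (ht : 1 + setDist A B / diam A < t) :
    ∃ x ∈ A, ∃ z ∈ A, ∃ y ∈ B, x ≠ z ∧ dist x y < t * dist x z := by
  have ht₀ : 0 < t := by
    have : 0 ≤ setDist A B / diam A := div_nonneg setDist_nonneg hA.le
    linarith
  have hlt : (diam A + setDist A B) / t < diam A := by
    rw [div_lt_comm₀ ht₀ hA, add_div, div_self hA.ne']
    exact ht
  obtain ⟨x, hx, z, hz, hxz⟩ : ∃ x ∈ A, ∃ z ∈ A, (diam A + setDist A B) / t < dist x z :=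
    exists_lt_dist_of_lt_diam (div_nonneg (add_nonneg hA.le setDist_nonneg) ht₀.le) hlt
  have hgap : setDist A B < t * dist x z - diam A := by
    rw [div_lt_iff₀' ht₀] at hxz
    linarith
  obtain ⟨a, ha, y, hy, hay⟩ := exists_dist_lt_of_setDist_lt ⟨x, hx⟩ hB hgap
  have hxy : dist x y < t * dist x z := calc
    dist x y ≤ dist x a + dist a y := dist_triangle x a y
    _ ≤ diam A + dist a y := by
      gcongr
      exact dist_le_diam_of_mem (isBounded_of_diam_pos hA) hx ha
    _ < t * dist x z := by linarith
  refine ⟨x, hx, z, hz, y, hy, ?_, hxy⟩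
  rintro rfl
  exact (dist_nonneg (x := x) (y := y)).not_gt (by simpa only [dist_self, mul_zero] using hxy)

end SetDist

namespace IsQSOn

variable {X Y : Type*} [MetricSpace X] [MetricSpace Y] {η : ℝ → ℝ} {f : X → Y} {s E : Set X}

theorem mono (hf : IsQSOn η f E) (hs : s ⊆ E) : IsQSOn η f s :=
  ⟨hf.1.mono hs, fun x hx y hy z hz => hf.2 x (hs hx) y (hs hy) z (hs hz)⟩

theorem dist_le_of_dist_le_mul (hf : IsQSOn η f E) (hη : MonotoneOn η (Ici 0)) {x y z : X}
    (hx : x ∈ E) (hy : y ∈ E) (hz : z ∈ E) (hxz : x ≠ z) {t : ℝ}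
    (h : dist x y ≤ t * dist x z) : dist (f x) (f y) ≤ η t * dist (f x) (f z) := by
  have hratio₀ : 0 ≤ dist x y / dist x z := by positivity
  have hratio : dist x y / dist x z ≤ t := (div_le_iff₀ (dist_pos.2 hxz)).2 h
  calc
    dist (f x) (f y) ≤ η (dist x y / dist x z) * dist (f x) (f z) := hf.2 x hx y hy z hz hxz
    _ ≤ η t * dist (f x) (f z) := by
      gcongr
      exact hη hratio₀ (hratio₀.trans hratio) hratio

theorem one_le_apply (hf : IsQSOn η f E) (hη : MonotoneOn η (Ici 0)) (hE : E.Nontrivial) {t : ℝ}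
    (ht : 1 ≤ t) : 1 ≤ η t := by
  obtain ⟨x, hx, z, hz, hxz⟩ := hE
  have hfxz : 0 < dist (f x) (f z) := dist_pos.2 fun h => hxz (hf.1 hx hz h)
  have hle : dist (f x) (f z) ≤ η t * dist (f x) (f z) :=
    hf.dist_le_of_dist_le_mul hη hx hz hz hxz (le_mul_of_one_le_left dist_nonneg ht)
  exact (le_mul_iff_one_le_left hfxz).1 hle

theorem isBounded_image (hf : IsQSOn η f s) (hη : MonotoneOn η (Ici 0))
    (hs : Bornology.IsBounded s) : Bornology.IsBounded (f '' s) := by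
  obtain hsub | ⟨x, hx, z, hz, hxz⟩ := s.subsingleton_or_nontrivial
  · exact (hsub.image f).finite.isBounded
  apply (isBounded_closedBall (x := f x) (r := η (diam s / dist x z) * dist (f x) (f z))).subset
  rintro _ ⟨y, hy, rfl⟩
  have hxy : dist x y ≤ diam s / dist x z * dist x z := by
    rw [div_mul_cancel₀ _ (dist_ne_zero.2 hxz)]
    exact dist_le_diam_of_mem hs hx hy
  rw [mem_closedBall']
  exact hf.dist_le_of_dist_le_mul hη hx hy hz hxz hxy

end IsQSOn

theorem qs_setDist_le_variant_general {X Y : Type*} [MetricSpace X] [MetricSpace Y]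
    {η : ℝ → ℝ} (hη : MonotoneOn η (Ici 0)) {f : X → Y} {A B : Set X}
    (hf : IsQSOn η f (A ∪ B)) (hA : 0 < diam A) (hB : B.Nonempty) {t : ℝ}
    (ht : 1 + setDist A B / diam A < t) :
    setDist (f '' A) (f '' B) ≤ η t * diam (f '' A) := by
  obtain ⟨x, hx, z, hz, y, hy, hxz, hxy⟩ := exists_dist_lt_mul_dist hA hB ht
  have hfA : IsQSOn η f A := hf.mono subset_union_left
  have ht₁ : 1 ≤ t := by
    have : 0 ≤ setDist A B / diam A := div_nonneg setDist_nonneg hA.le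
    linarith
  have hηt : 0 ≤ η t := zero_le_one.trans (hfA.one_le_apply hη ⟨x, hx, z, hz, hxz⟩ ht₁)
  calc
    setDist (f '' A) (f '' B) ≤ dist (f x) (f y) :=
      setDist_le_dist (mem_image_of_mem f hx) (mem_image_of_mem f hy)
    _ ≤ η t * dist (f x) (f z) :=
      hf.dist_le_of_dist_le_mul hη (.inl hx) (.inr hy) (.inl hz) hxz hxy.le
    _ ≤ η t * diam (f '' A) := by
      gcongr
      exact dist_le_diam_of_mem (hfA.isBounded_image hη (isBounded_of_diam_pos hA))
        (mem_image_of_mem f hx) (mem_image_of_mem f hz)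

/-- For an `η`-quasisymmetry `f` and nonempty compact sets `A, B` with
`0 < |A|` and `|B| ≤ |A|`, one has `dist(f A, f B) ≤ (1 + η(2 + dist(A,B)/|A|)) · |f A|`. -/
theorem qs_setDist_le_variant {X Y : Type*} [MetricSpace X] [MetricSpace Y]
    (η : ℝ → ℝ) (hη : IsDistortion η) (f : X → Y) (hf : IsQSOn η f Set.univ)
    (A B : Set X) (hAne : A.Nonempty) (hBne : B.Nonempty)
    (hAc : IsCompact A) (hBc : IsCompact B)
    (hA : 0 < Metric.diam A) (hBA : Metric.diam B ≤ Metric.diam A) :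
    setDist (f '' A) (f '' B) ≤
      (1 + η (2 + setDist A B / Metric.diam A)) * Metric.diam (f '' A) := by
  have ht : 1 + setDist A B / diam A < 2 + setDist A B / diam A := by gcongr; norm_num
  exact (qs_setDist_le_variant_general hη.2.1.monotoneOn (hf.mono (subset_univ _)) hA hBne ht).trans
    (mul_le_mul_of_nonneg_right (le_add_of_nonneg_left zero_le_one) diam_nonneg)
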